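/- Let ψ ∈ N(σ), i ∈ {1, …, |N(σ)|} with Pr[ψ ↝ i] > 0, and e ∈ E \ dom(ψ). Conditioned additionally on the event B(e) that e is selected by both σ and π*: α·E[μ(e) | B(e) ∧ ψ ↝ i] ≥ υ_ψ·E[δ⁺_ψ(e) | B(e) ∧ ψ ↝ i]. -/

import Mathlib

/-!
Common framework for the Stochastic Submodular Cover problem
(Hellerstein–Kletenik–Parthasarathy, "A Tight Bound for Stochastic Submodular Cover").
-/

namespace SSC

open Finset
open scoped Classical

noncomputable section

variable {E O : Type*}

/-- A subrealization assigns to each item either a state or `none` (unassigned).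
A realization corresponds to the case where every item is assigned. -/
abbrev Sub (E O : Type*) := E → Option O

/-- `subext ψ ψ'` means `ψ ⊆ ψ'` as partial assignments of states to items. -/
def subext (ψ ψ' : Sub E O) : Prop := ∀ e o, ψ e = some o → ψ' e = some o

/-- `ssubext ψ ψ'` means `ψ ⊂ ψ'` (strict extension). -/
def ssubext (ψ ψ' : Sub E O) : Prop := subext ψ ψ' ∧ ψ ≠ ψ'

/-- Extend a subrealization `ψ` by assigning state `o` to item `e`. -/
def updateSub [DecidableEq E] (ψ : Sub E O) (e : E) (o : O) : Sub E O :=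
  fun e' => if e' = e then some o else ψ e'

/-- View a (full) realization as a subrealization. -/
def toSub (φ : E → O) : Sub E O := fun e => some (φ e)

variable [Fintype E] [DecidableEq E] [Fintype O] [DecidableEq O]

/-- An instance of the Stochastic Submodular Cover problem: positive item costs `c`,
a probability mass function `p` on realizations with mutually independent item states,
and a utility function `f` on subrealizations which is zero on the empty subrealization,
nonnegative, monotone and submodular (pointwise polymatroid), and equal to the goal
value `Q > 0` on every full realization (coverability). -/
structure Problem (E O : Type*) [Fintype E] [DecidableEq E] [Fintype O] [DecidableEq O] where
  c : E → ℝ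
  c_pos : ∀ e, 0 < c e
  p : (E → O) → ℝ
  p_nonneg : ∀ φ, 0 ≤ p φ
  p_sum : ∑ φ : E → O, p φ = 1
  indep : ∀ φ : E → O, p φ = ∏ e : E, ∑ φ' : E → O, if φ' e = φ e then p φ' else 0
  f : Sub E O → ℝ
  f_nonneg : ∀ ψ, 0 ≤ f ψ
  f_empty : f (fun _ => none) = 0
  f_mono : ∀ ψ ψ' : Sub E O, subext ψ ψ' → f ψ ≤ f ψ'
  f_submod : ∀ (ψ ψ' : Sub E O) (e : E) (o : O), subext ψ ψ' → ψ' e = none →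
      f (updateSub ψ' e o) - f ψ' ≤ f (updateSub ψ e o) - f ψ
  Q : ℝ
  Q_pos : 0 < Q
  f_cover : ∀ φ : E → O, f (toSub φ) = Q

variable (M : Problem E O)

/-- Expectation of a random variable `X` with respect to the random realization `Φ`. -/
def Ex (X : (E → O) → ℝ) : ℝ := ∑ φ : E → O, M.p φ * X φ

/-- Probability of an event `A` of the random realization `Φ`. -/
def Pr (A : (E → O) → Prop) : ℝ := ∑ φ : E → O, if A φ then M.p φ else 0

/-- Conditional expectation `E[X | A]`. -/
def cEx (X : (E → O) → ℝ) (A : (E → O) → Prop) : ℝ :=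
  (∑ φ : E → O, if A φ then M.p φ * X φ else 0) / Pr M A

/-- The random marginal increase in utility `F_ψ(e)` from observing the state of `e`. -/
def Fm (ψ : Sub E O) (e : E) (φ : E → O) : ℝ := M.f (updateSub ψ e (φ e)) - M.f ψ

/-- The unit price `υ(e|ψ) = c(e) / E[F_ψ(e)]`. -/
def price (ψ : Sub E O) (e : E) : ℝ := M.c e / Ex M (Fm M ψ e)

/-- An adaptive covering policy: at every subrealization `ψ` with `f ψ < Q` it selects an
item outside `dom ψ`. -/
def IsPolicy (π : Sub E O → E) : Prop := ∀ ψ : Sub E O, M.f ψ < M.Q → ψ (π ψ) = none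

/-- The `α`-approximate adaptive greedy policy: at every `ψ` with `f ψ < Q` the unit price of
the selected item `σ ψ` is at most `α` times the minimum unit price, i.e.
`υ(σ ψ | ψ) ≤ α · υ(e | ψ)` for every `e ∉ dom ψ`, written multiplicatively so that infinite
unit prices (zero expected marginal utility) are handled correctly. -/
def IsGreedy (α : ℝ) (σ : Sub E O → E) : Prop :=
  IsPolicy M σ ∧
    ∀ ψ : Sub E O, M.f ψ < M.Q → ∀ e : E, ψ e = none →
      M.c (σ ψ) * Ex M (Fm M ψ e) ≤ α * M.c e * Ex M (Fm M ψ (σ ψ))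

/-- One step of executing policy `π` on realization `φ`. -/
def stepPol (π : Sub E O → E) (φ : E → O) (ψ : Sub E O) : Sub E O :=
  if M.f ψ < M.Q then updateSub ψ (π ψ) (φ (π ψ)) else ψ

/-- The subrealization reached after `n` steps of executing `π` on `φ`. -/
def execAux (π : Sub E O → E) (φ : E → O) : ℕ → Sub E O
  | 0 => fun _ => none
  | n + 1 => stepPol M π φ (execAux π φ n)

/-- The cover `Ψ(π)` constructed by executing `π` on realization `φ`. -/
def cover (π : Sub E O → E) (φ : E → O) : Sub E O := execAux M π φ (Fintype.card E)

/-- `ψ` is visited when executing `π` on realization `φ`. -/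
def visits (π : Sub E O → E) (φ : E → O) (ψ : Sub E O) : Prop := ∃ n, execAux M π φ n = ψ

/-- The set `S(π)` of items selected when executing `π` on `φ`. -/
def Ssel (π : Sub E O → E) (φ : E → O) : Finset E :=
  Finset.univ.filter fun e => cover M π φ e ≠ none

/-- The cost `C(π)` incurred when executing `π` on `φ`. -/
def C (π : Sub E O → E) (φ : E → O) : ℝ := ∑ e ∈ Ssel M π φ, M.c e

/-- An adaptive covering policy of minimum expected cost. -/
def IsOptimal (π : Sub E O → E) : Prop :=
  IsPolicy M π ∧ ∀ π' : Sub E O → E, IsPolicy M π' → Ex M (C M π) ≤ Ex M (C M π')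

/-- `N(π)`: the non-leaf nodes of the decision tree of `π` — subrealizations with
`f ψ < Q` that are visited with positive probability. -/
def Nnodes (π : Sub E O → E) : Finset (Sub E O) :=
  Finset.univ.filter fun ψ => M.f ψ < M.Q ∧ 0 < Pr M fun φ => visits M π φ ψ

/-- The event `ψ ↝ i`, for a marker located at utility value `b = f(ρ_i)`:
`ψ` is the last subrealization visited by `σ` (on the given realization) whose
utility is at most `b`. -/
def leadsTo (σ : Sub E O → E) (b : ℝ) (ψ : Sub E O) (φ : E → O) : Prop :=
  visits M σ φ ψ ∧ M.f ψ ≤ b ∧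
    ∀ ψ' : Sub E O, visits M σ φ ψ' → M.f ψ' ≤ b → subext ψ' ψ

/-- The revenue `λ_i = υ_ψ · ε_i` collected by `σ` from the marker located at utility
value `b = f(ρ_i)` with interval length `εi`, where `ψ` is the unique subrealization
with `ψ ↝ i`. -/
def lam (σ : Sub E O → E) (b εi : ℝ) (φ : E → O) : ℝ :=
  ∑ ψ : Sub E O, if leadsTo M σ b ψ φ then price M ψ (σ ψ) * εi else 0

/-- The revenue `μ(e)` collected by the optimal policy `πs` from item `e`
(relative to the greedy policy `σ`, both executed on the same realization). -/
def mu (σ πs : Sub E O → E) (e : E) (φ : E → O) : ℝ :=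
  if e ∈ Ssel M πs φ then
    if e ∈ Ssel M σ φ then
      ∑ ψ : Sub E O,
        if visits M σ φ ψ ∧ M.f ψ < M.Q ∧ σ ψ = e then price M ψ e * Fm M ψ e φ else 0
    else M.c e
  else 0

/-- The total revenue `μ*` collected by the optimal policy. -/
def muStar (σ πs : Sub E O → E) (φ : E → O) : ℝ := ∑ e : E, mu M σ πs e φ

/-- Replay of the internal state of policy `πs` in the second stage of the hybrid policy:
starting from the empty subrealization, repeatedly query `πs`; an item whose state is
already recorded in `ψ'` is not re-selected, its recorded state being used instead. -/
def replayAux (πs : Sub E O → E) (ψ' : Sub E O) : ℕ → Sub E O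
  | 0 => fun _ => none
  | n + 1 =>
    if M.f (replayAux πs ψ' n) < M.Q then
      match ψ' (πs (replayAux πs ψ' n)) with
      | some o => updateSub (replayAux πs ψ' n) (πs (replayAux πs ψ' n)) o
      | none => replayAux πs ψ' n
    else replayAux πs ψ' n

/-- The hybrid policy `π^ψ0`: follow `σ` until `ψ0` is visited, then switch to executing
`πs` from the root of its tree, never re-selecting an item of `dom ψ0` and using the
state recorded in `ψ0` instead. -/
def hybrid (σ πs : Sub E O → E) (ψ0 : Sub E O) : Sub E O → E := fun ψ' =>
  if subext ψ0 ψ' then πs (replayAux M πs ψ' (Fintype.card E)) else σ ψ'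

/-- `δ⁺_ψ0(e)`: the marginal utility obtained by the hybrid policy `π^ψ0` when it selects
`e` during its second stage, and `0` if `e` is not selected in the second stage. -/
def deltaPlus (σ πs : Sub E O → E) (ψ0 : Sub E O) (e : E) (φ : E → O) : ℝ :=
  ∑ ψ' : Sub E O,
    if subext ψ0 ψ' ∧ visits M (hybrid M σ πs ψ0) φ ψ' ∧
        ssubext ψ' (cover M (hybrid M σ πs ψ0) φ) ∧ hybrid M σ πs ψ0 ψ' = e
    then Fm M ψ' e φ else 0

/-!
Compare both sides with the cost `c(e)`. By submodularity `δ⁺_ψ(e) ≤ F_ψ(e)`. If `σ` selects `e` at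
`ψ` itself, then `μ(e) = υ_ψ F_ψ(e)` on `B(e) ∧ ψ ↝ i` and we are done. Otherwise the event
`A = B(e) ∧ ψ ↝ i` is determined by the states of the items other than `e`: whether a policy ever
selects `e` does not depend on the state of `e`, and `ψ ↝ i` only depends on the states of the items
in `dom ψ` and of the item selected at `ψ`. Independence of the item states then gives
`υ_ψ E[F_ψ(e); A] = υ_ψ E[F_ψ(e)] Pr[A] ≤ α c(e) Pr[A]`, by the greedy choice at `ψ`. On the other
hand `E[μ(e); A] ≥ c(e) Pr[A]`: conditioned on the node at which `σ` selects `e`, the state of `e`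
is still fresh, so the expected revenue from `e` is its unit price times its expected marginal
utility, which is `c(e)`.
-/

section Subrealizations

variable {ι κ : Type*} {ψ ψ' χ : Sub ι κ} {φ φ' : ι → κ} {e : ι} {o : κ}

lemma subext.refl (ψ : Sub ι κ) : subext ψ ψ := fun _ _ h => h

lemma subext.trans (h : subext ψ ψ') (h' : subext ψ' χ) : subext ψ χ :=
  fun e o ho => h' e o (h e o ho)

lemma subext.eq_none (h : subext ψ ψ') (he : ψ' e = none) : ψ e = none :=
  Option.eq_none_iff_forall_ne_some.mpr fun o ho => by simp [h e o ho] at he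

lemma subext.eq_none_or_eq_some (h : subext ψ (toSub φ)) (e : ι) :
    ψ e = none ∨ ψ e = some (φ e) := by
  rcases ho : ψ e with _ | o
  · exact .inl rfl
  · exact .inr (h e o ho).symm

lemma subext.toSub_congr (h : subext ψ (toSub φ)) (hφ : ∀ e, ψ e ≠ none → φ e = φ' e) :
    subext ψ (toSub φ') := by
  intro e o ho
  rw [toSub, ← hφ e (by simp [ho])]
  exact h e o ho

variable [DecidableEq ι]

lemma updateSub_eq_update (ψ : Sub ι κ) (e : ι) (o : κ) :
    updateSub ψ e o = Function.update ψ e (some o) := by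
  funext e'
  simp only [updateSub, Function.update_apply]

@[simp]
lemma updateSub_self (ψ : Sub ι κ) (e : ι) (o : κ) : updateSub ψ e o e = some o := if_pos rfl

lemma updateSub_of_ne {e' : ι} (h : e' ≠ e) (ψ : Sub ι κ) (o : κ) : updateSub ψ e o e' = ψ e' :=
  if_neg h

lemma updateSub_eq_self (h : ψ e = some o) : updateSub ψ e o = ψ := by
  rw [updateSub_eq_update, ← h, Function.update_eq_self]

lemma subext_updateSub (h : ψ e = none) (o : κ) : subext ψ (updateSub ψ e o) := by
  intro e' o' ho'
  rwa [updateSub_of_ne]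
  rintro rfl
  simp [h] at ho'

lemma subext.updateSub_subext (h : subext ψ χ) (he : χ e = some o) :
    subext (updateSub ψ e o) χ := by
  intro e' o' ho'
  by_cases h' : e' = e
  · rw [h', ← ho', h', updateSub_self, he]
  · exact h e' o' (updateSub_of_ne h' ψ o ▸ ho')

end Subrealizations

variable {M}

section MarginalUtility

variable {ψ ψ' : Sub E O} {φ : E → O} {e : E}

lemma f_le_Q (h : subext ψ (toSub φ)) : M.f ψ ≤ M.Q := M.f_cover φ ▸ M.f_mono _ _ h

lemma Fm_nonneg (h : ψ e = none) (φ : E → O) : 0 ≤ Fm M ψ e φ :=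
  sub_nonneg.mpr (M.f_mono _ _ (subext_updateSub h _))

lemma Fm_eq_zero_of_eq_some (h : ψ e = some (φ e)) : Fm M ψ e φ = 0 := by
  rw [Fm, updateSub_eq_self h, sub_self]

lemma Fm_nonpos_of_Q_le (h : subext ψ (toSub φ)) (hQ : M.Q ≤ M.f ψ) : Fm M ψ e φ ≤ 0 :=
  sub_nonpos.mpr ((f_le_Q (h.updateSub_subext rfl)).trans hQ)

lemma Fm_anti (h : subext ψ ψ') (he : ψ' e = none) (φ : E → O) : Fm M ψ' e φ ≤ Fm M ψ e φ :=
  M.f_submod ψ ψ' e (φ e) h he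

lemma dependsOn_Fm (ψ : Sub E O) (e : E) : DependsOn (Fm M ψ e) {e} := by
  intro φ φ' h
  rw [Fm, Fm, h e rfl]

lemma f_piecewise_le (h : subext ψ (toSub φ)) (S : Finset E) :
    M.f (S.piecewise (toSub φ) ψ) ≤ M.f ψ + ∑ e ∈ S, Fm M ψ e φ := by
  induction S using Finset.induction_on with
  | empty => simp
  | insert a S ha ih =>
    set χ := S.piecewise (toSub φ) ψ
    have hχa : χ a = ψ a := S.piecewise_eq_of_notMem _ _ ha
    have hinsert : (insert a S).piecewise (toSub φ) ψ = updateSub χ a (φ a) := by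
      rw [Finset.piecewise_insert, updateSub_eq_update]
      rfl
    have hmarginal : M.f (updateSub χ a (φ a)) - M.f χ ≤ Fm M ψ a φ := by
      rcases h.eq_none_or_eq_some a with hnone | hsome
      · refine M.f_submod ψ χ a (φ a) (fun e o ho => ?_) (hχa.trans hnone)
        by_cases he : e ∈ S
        · exact (S.piecewise_eq_of_mem _ _ he).trans (h e o ho)
        · exact (S.piecewise_eq_of_notMem _ _ he).trans ho
      · rw [updateSub_eq_self (hχa.trans hsome), sub_self, Fm_eq_zero_of_eq_some hsome]
    rw [hinsert, Finset.sum_insert ha]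
    linarith

lemma exists_Fm_pos (h : subext ψ (toSub φ)) (hQ : M.f ψ < M.Q) :
    ∃ e, ψ e = none ∧ 0 < Fm M ψ e φ := by
  by_contra! hcon
  have hnonpos : ∀ e ∈ Finset.univ, Fm M ψ e φ ≤ 0 := fun e _ =>
    (h.eq_none_or_eq_some e).elim (hcon e) fun he => (Fm_eq_zero_of_eq_some he).le
  have hcover := f_piecewise_le (M := M) h Finset.univ
  rw [Finset.piecewise_univ, M.f_cover] at hcover
  linarith [Finset.sum_nonpos hnonpos]

end MarginalUtility

section Expectation

variable {A : (E → O) → Prop} {X Y : (E → O) → ℝ}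

variable (M) in
/-- The expectation `E[X; A] = E[X · 1_A]` of `X` restricted to the event `A`. Unlike the
conditional expectation `exOn M X A / Pr M A`, it needs no convention when `A` is a null event. -/
def exOn (X : (E → O) → ℝ) (A : (E → O) → Prop) : ℝ :=
  ∑ φ : E → O, if A φ then M.p φ * X φ else 0

lemma Pr_nonneg (A : (E → O) → Prop) : 0 ≤ Pr M A :=
  Finset.sum_nonneg fun φ _ => ite_nonneg (M.p_nonneg φ) le_rfl

lemma exists_of_Pr_pos (h : 0 < Pr M A) : ∃ φ, A φ ∧ 0 < M.p φ := by
  obtain ⟨φ, -, hφ⟩ := Finset.exists_ne_zero_of_sum_ne_zero h.ne'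
  obtain ⟨hA, hp⟩ := ite_ne_right_iff.mp hφ
  exact ⟨φ, hA, (M.p_nonneg φ).lt_of_ne' hp⟩

lemma Pr_mono {B : (E → O) → Prop} (h : ∀ φ, A φ → B φ) : Pr M A ≤ Pr M B := by
  refine Finset.sum_le_sum fun φ _ => ?_
  by_cases hA : A φ
  · rw [if_pos hA, if_pos (h φ hA)]
  · rw [if_neg hA]
    exact ite_nonneg (M.p_nonneg φ) le_rfl

lemma Pr_le_sum_Pr {ι : Type*} {s : Finset ι} {B : ι → (E → O) → Prop}
    (h : ∀ φ, A φ → ∃ i ∈ s, B i φ) : Pr M A ≤ ∑ i ∈ s, Pr M (B i) := by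
  unfold Pr
  rw [Finset.sum_comm]
  refine Finset.sum_le_sum fun φ _ => ?_
  by_cases hA : A φ
  · obtain ⟨i, hi, hB⟩ := h φ hA
    refine (le_of_eq ?_).trans
      (Finset.single_le_sum (fun j _ => ite_nonneg (M.p_nonneg φ) le_rfl) hi)
    rw [if_pos hA, if_pos hB]
  · rw [if_neg hA]
    exact Finset.sum_nonneg fun i _ => ite_nonneg (M.p_nonneg φ) le_rfl

lemma Ex_pos (hX : ∀ φ, 0 ≤ X φ) {φ : E → O} (hp : 0 < M.p φ) (hφ : 0 < X φ) : 0 < Ex M X :=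
  Finset.sum_pos' (fun χ _ => mul_nonneg (M.p_nonneg χ) (hX χ))
    ⟨φ, Finset.mem_univ φ, mul_pos hp hφ⟩

lemma exOn_mono (h : ∀ φ, A φ → X φ ≤ Y φ) : exOn M X A ≤ exOn M Y A := by
  refine Finset.sum_le_sum fun φ _ => ?_
  split_ifs with hA
  · exact mul_le_mul_of_nonneg_left (h φ hA) (M.p_nonneg φ)
  · rfl

lemma exOn_const_mul (a : ℝ) (X : (E → O) → ℝ) (A : (E → O) → Prop) :
    exOn M (fun φ => a * X φ) A = a * exOn M X A := by
  simp only [exOn, Finset.mul_sum, mul_ite, mul_zero, mul_left_comm]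

lemma exOn_sum_ite {ι : Type*} (s : Finset ι) (B : ι → (E → O) → Prop) (X : ι → (E → O) → ℝ)
    (A : (E → O) → Prop) :
    exOn M (fun φ => ∑ i ∈ s, if B i φ then X i φ else 0) A =
      ∑ i ∈ s, exOn M (X i) fun φ => A φ ∧ B i φ := by
  unfold exOn
  rw [Finset.sum_comm]
  refine Finset.sum_congr rfl fun φ _ => ?_
  by_cases hA : A φ <;> simp [hA, Finset.mul_sum]

lemma mul_cEx_le_mul_cEx {a b : ℝ} (h : a * exOn M X A ≤ b * exOn M Y A) :
    a * cEx M X A ≤ b * cEx M Y A := by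
  rw [cEx, cEx, ← mul_div_assoc, ← mul_div_assoc]
  exact div_le_div_of_nonneg_right h (Pr_nonneg A)

lemma p_piecewise_mul_p_piecewise (s : Set E) (φ φ' : E → O) :
    M.p (s.piecewise φ' φ) * M.p (s.piecewise φ φ') = M.p φ * M.p φ' := by
  rw [M.indep (s.piecewise φ' φ), M.indep (s.piecewise φ φ'), M.indep φ, M.indep φ',
    ← Finset.prod_mul_distrib, ← Finset.prod_mul_distrib]
  refine Finset.prod_congr rfl fun e _ => ?_
  by_cases he : e ∈ s
  · simp only [Set.piecewise_eq_of_mem s _ _ he, mul_comm]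
  · simp only [Set.piecewise_eq_of_notMem s _ _ he]

/- Draw a second, independent realization `φ'` and exchange the states of the items in `s` between
`φ` and `φ'`: this preserves the joint law and the event `A φ`, and turns `X φ` into `X φ'`. -/
lemma exOn_eq_Ex_mul_Pr {s : Set E} (hX : DependsOn X s) (hA : DependsOn A sᶜ) :
    exOn M X A = Ex M X * Pr M A := by
  let swap : (E → O) × (E → O) → (E → O) × (E → O) :=
    fun z => (s.piecewise z.2 z.1, s.piecewise z.1 z.2)
  have hswap : Function.Involutive swap := fun z =>
    Prod.ext (funext fun e => by by_cases he : e ∈ s <;> simp [swap, he])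
      (funext fun e => by by_cases he : e ∈ s <;> simp [swap, he])
  have hsummand (z : (E → O) × (E → O)) :
      (if A z.1 then M.p z.1 * X z.1 else 0) * M.p z.2 =
        M.p (swap z).2 * X (swap z).2 * if A (swap z).1 then M.p (swap z).1 else 0 := by
    have hXz : X (swap z).2 = X z.1 := hX fun e he => Set.piecewise_eq_of_mem s _ _ he
    have hAz : A (swap z).1 = A z.1 := hA fun e he => Set.piecewise_eq_of_notMem s _ _ he
    have hpz : M.p (swap z).1 * M.p (swap z).2 = M.p z.1 * M.p z.2 :=
      p_piecewise_mul_p_piecewise s z.1 z.2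
    rw [hXz]
    simp only [hAz]
    split_ifs
    · linear_combination -X z.1 * hpz
    · simp only [zero_mul, mul_zero]
  calc exOn M X A = exOn M X A * ∑ φ, M.p φ := by rw [M.p_sum, mul_one]
    _ = ∑ z : (E → O) × (E → O), (if A z.1 then M.p z.1 * X z.1 else 0) * M.p z.2 := by
      rw [exOn, Fintype.sum_mul_sum, Fintype.sum_prod_type]
    _ = ∑ z : (E → O) × (E → O), M.p z.2 * X z.2 * if A z.1 then M.p z.1 else 0 :=
      Fintype.sum_equiv hswap.toPerm _ _ hsummand
    _ = Ex M X * Pr M A := by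
      rw [Ex, Pr, Fintype.sum_mul_sum, Finset.sum_comm, Fintype.sum_prod_type]

end Expectation

section Execution

variable {π : Sub E O → E} {φ φ' : E → O} {ψ ψ₁ ψ₂ : Sub E O} {e : E}

lemma execAux_succ_of_lt {n : ℕ} (h : M.f (execAux M π φ n) < M.Q) :
    execAux M π φ (n + 1) =
      updateSub (execAux M π φ n) (π (execAux M π φ n)) (φ (π (execAux M π φ n))) :=
  if_pos h

lemma execAux_succ_of_le {n : ℕ} (h : M.Q ≤ M.f (execAux M π φ n)) :
    execAux M π φ (n + 1) = execAux M π φ n :=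
  if_neg h.not_gt

lemma execAux_subext_toSub (π : Sub E O → E) (φ : E → O) (n : ℕ) :
    subext (execAux M π φ n) (toSub φ) := by
  induction n with
  | zero => simp [execAux, subext]
  | succ n ih =>
    rcases lt_or_ge (M.f (execAux M π φ n)) M.Q with h | h
    · rw [execAux_succ_of_lt h]
      exact ih.updateSub_subext rfl
    · rwa [execAux_succ_of_le h]

lemma execAux_subext_succ (π : Sub E O → E) (φ : E → O) (n : ℕ) :
    subext (execAux M π φ n) (execAux M π φ (n + 1)) := by
  rcases lt_or_ge (M.f (execAux M π φ n)) M.Q with h | h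
  · rw [execAux_succ_of_lt h]
    rcases (execAux_subext_toSub π φ n).eq_none_or_eq_some (π (execAux M π φ n)) with he | he
    · exact subext_updateSub he _
    · rw [updateSub_eq_self he]
      exact .refl _
  · rw [execAux_succ_of_le h]
    exact .refl _

lemma execAux_mono (π : Sub E O → E) (φ : E → O) {m n : ℕ} (h : m ≤ n) :
    subext (execAux M π φ m) (execAux M π φ n) := by
  induction n, h using Nat.le_induction with
  | base => exact .refl _
  | succ n _ ih => exact ih.trans (execAux_subext_succ π φ n)

lemma updateSub_subext_execAux_of_lt {m n : ℕ} (hmn : m < n) (h : M.f (execAux M π φ m) < M.Q) :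
    subext (updateSub (execAux M π φ m) (π (execAux M π φ m)) (φ (π (execAux M π φ m))))
      (execAux M π φ n) :=
  execAux_succ_of_lt h ▸ execAux_mono π φ hmn

lemma execAux_eq_of_subext_toSub {n : ℕ} (h : subext (execAux M π φ n) (toSub φ')) :
    execAux M π φ' n = execAux M π φ n := by
  induction n with
  | zero => rfl
  | succ n ih =>
    have ih' := ih ((execAux_subext_succ π φ n).trans h)
    rcases lt_or_ge (M.f (execAux M π φ n)) M.Q with hQ | hQ
    · have hstate : φ' (π (execAux M π φ n)) = φ (π (execAux M π φ n)) := by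
        rw [execAux_succ_of_lt hQ] at h
        simpa [toSub] using h _ _ (updateSub_self _ _ _)
      rw [execAux_succ_of_lt hQ, execAux_succ_of_lt (ih'.symm ▸ hQ), ih', hstate]
    · rw [execAux_succ_of_le hQ, execAux_succ_of_le (ih'.symm ▸ hQ), ih']

lemma visits.subext_toSub (h : visits M π φ ψ) : subext ψ (toSub φ) := by
  obtain ⟨n, rfl⟩ := h
  exact execAux_subext_toSub π φ n

lemma visits_congr (h : ∀ e, ψ e ≠ none → φ e = φ' e) (hψ : visits M π φ ψ) :
    visits M π φ' ψ := by
  obtain ⟨n, rfl⟩ := hψ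
  exact ⟨n, execAux_eq_of_subext_toSub ((execAux_subext_toSub π φ n).toSub_congr h)⟩

lemma dependsOn_visits (π : Sub E O → E) (ψ : Sub E O) :
    DependsOn (fun φ => visits M π φ ψ) {e | ψ e ≠ none} := fun _ _ h =>
  propext ⟨visits_congr h, visits_congr fun e he => (h e he).symm⟩

lemma visits.eq_of_select_eq (h₁ : visits M π φ ψ₁) (h₂ : visits M π φ ψ₂)
    (hQ₁ : M.f ψ₁ < M.Q) (hQ₂ : M.f ψ₂ < M.Q) (he₁ : ψ₁ e = none) (he₂ : ψ₂ e = none)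
    (hπ₁ : π ψ₁ = e) (hπ₂ : π ψ₂ = e) : ψ₁ = ψ₂ := by
  obtain ⟨m, rfl⟩ := h₁
  obtain ⟨n, rfl⟩ := h₂
  rcases lt_trichotomy m n with hmn | rfl | hnm
  · have hsel := (updateSub_subext_execAux_of_lt hmn hQ₁).eq_none (hπ₁ ▸ he₂)
    simp at hsel
  · rfl
  · have hsel := (updateSub_subext_execAux_of_lt hnm hQ₂).eq_none (hπ₂ ▸ he₁)
    simp at hsel

lemma mem_Ssel : e ∈ Ssel M π φ ↔ cover M π φ e ≠ none := by
  simp [Ssel]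

lemma mem_Ssel_of_mem_Ssel (h : ∀ e' ≠ e, φ e' = φ' e') (he : e ∈ Ssel M π φ) :
    e ∈ Ssel M π φ' := by
  rw [mem_Ssel] at he ⊢
  refine fun he' => he ?_
  have hsub : subext (cover M π φ') (toSub φ) :=
    (execAux_subext_toSub π φ' _).toSub_congr fun e' hsome =>
      (h e' fun heq => hsome (heq ▸ he')).symm
  rwa [cover, execAux_eq_of_subext_toSub hsub]

lemma dependsOn_mem_Ssel (π : Sub E O → E) (e : E) :
    DependsOn (fun φ => e ∈ Ssel M π φ) {e}ᶜ := fun _ _ h =>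
  propext ⟨mem_Ssel_of_mem_Ssel h, mem_Ssel_of_mem_Ssel fun e' he' => (h e' he').symm⟩

lemma exists_visits_select_of_mem_Ssel (h : e ∈ Ssel M π φ) :
    ∃ ψ, visits M π φ ψ ∧ M.f ψ < M.Q ∧ π ψ = e := by
  suffices hexec : ∀ n, execAux M π φ n e ≠ none →
      ∃ ψ, visits M π φ ψ ∧ M.f ψ < M.Q ∧ π ψ = e from hexec _ (mem_Ssel.mp h)
  intro n
  induction n with
  | zero => simp [execAux]
  | succ n ih =>
    intro hn
    rcases lt_or_ge (M.f (execAux M π φ n)) M.Q with hQ | hQ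
    · by_cases he : e = π (execAux M π φ n)
      · exact ⟨_, ⟨n, rfl⟩, hQ, he.symm⟩
      · rw [execAux_succ_of_lt hQ, updateSub_of_ne he] at hn
        exact ih hn
    · rw [execAux_succ_of_le hQ] at hn
      exact ih hn

lemma leadsTo_iff {b : ℝ} (hQ : M.f ψ < M.Q) (hπ : ψ (π ψ) = none) :
    leadsTo M π b ψ φ ↔
      visits M π φ ψ ∧ M.f ψ ≤ b ∧ b < M.f (updateSub ψ (π ψ) (φ (π ψ))) := by
  refine and_congr_right ?_
  rintro ⟨n, rfl⟩
  refine and_congr_right fun _ => ⟨fun hlast => ?_, fun hb => ?_⟩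
  · by_contra! hle
    have hsub := hlast _ ⟨n + 1, execAux_succ_of_lt hQ⟩ hle
    simpa using hsub.eq_none hπ
  · rintro _ ⟨m, rfl⟩ hm
    refine execAux_mono π φ (le_of_not_gt fun hnm => ?_)
    exact (hb.trans_le (M.f_mono _ _ (updateSub_subext_execAux_of_lt hnm hQ))).not_ge hm

lemma dependsOn_leadsTo {b : ℝ} (hQ : M.f ψ < M.Q) (hπ : ψ (π ψ) = none) :
    DependsOn (leadsTo M π b ψ) ({e | ψ e ≠ none} ∪ {π ψ}) := by
  intro φ φ' h
  have hvisits : visits M π φ ψ = visits M π φ' ψ :=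
    dependsOn_visits π ψ fun e he => h e (.inl he)
  rw [leadsTo_iff hQ hπ, leadsTo_iff hQ hπ, hvisits, h (π ψ) (.inr rfl)]

end Execution

section Bounds

variable {α : ℝ} {σ π πs : Sub E O → E} {φ : E → O} {ψ : Sub E O} {e : E} {A : (E → O) → Prop}

/- Only the first selection of `e` contributes, and it happens at an extension of `ψ`. -/
lemma sum_Fm_le (he : ψ e = none) (T : Finset (Sub E O))
    (hT : ∀ χ ∈ T, subext ψ χ ∧ visits M π φ χ ∧ π χ = e) :
    ∑ χ ∈ T, Fm M χ e φ ≤ Fm M ψ e φ := by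
  set T' := T.filter fun χ => M.f χ < M.Q ∧ χ e = none
  have hT' : T' ⊆ T := Finset.filter_subset _ _
  have hzero : ∀ χ ∈ T, χ ∉ T' → Fm M χ e φ ≤ 0 := by
    intro χ hχ hχ'
    have hsub := (hT χ hχ).2.1.subext_toSub
    rcases lt_or_ge (M.f χ) M.Q with hQ | hQ
    · have hne : χ e ≠ none := fun h => hχ' (Finset.mem_filter.mpr ⟨hχ, hQ, h⟩)
      exact (Fm_eq_zero_of_eq_some ((hsub.eq_none_or_eq_some e).resolve_left hne)).le
    · exact Fm_nonpos_of_Q_le hsub hQ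
  have hcard : T'.card ≤ 1 := by
    refine Finset.card_le_one.mpr fun χ hχ χ' hχ' => ?_
    obtain ⟨hχ, hQ, hn⟩ := Finset.mem_filter.mp hχ
    obtain ⟨hχ', hQ', hn'⟩ := Finset.mem_filter.mp hχ'
    exact (hT χ hχ).2.1.eq_of_select_eq (hT χ' hχ').2.1 hQ hQ' hn hn' (hT χ hχ).2.2 (hT χ' hχ').2.2
  calc ∑ χ ∈ T, Fm M χ e φ ≤ ∑ χ ∈ T', Fm M χ e φ := by
        rw [← Finset.sum_sdiff hT']
        refine add_le_of_nonpos_left (Finset.sum_nonpos fun χ hχ => ?_)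
        exact hzero χ (Finset.mem_sdiff.mp hχ).1 (Finset.mem_sdiff.mp hχ).2
    _ ≤ T'.card • Fm M ψ e φ := Finset.sum_le_card_nsmul _ _ _ fun χ hχ =>
        Fm_anti (hT χ (hT' hχ)).1 (Finset.mem_filter.mp hχ).2.2 φ
    _ ≤ 1 • Fm M ψ e φ := nsmul_le_nsmul_left (Fm_nonneg he φ) hcard
    _ = Fm M ψ e φ := one_nsmul _

lemma deltaPlus_le_Fm (σ πs : Sub E O → E) (he : ψ e = none) (φ : E → O) :
    deltaPlus M σ πs ψ e φ ≤ Fm M ψ e φ := by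
  rw [deltaPlus, ← Finset.sum_filter]
  refine sum_Fm_le (π := hybrid M σ πs ψ) he _ fun χ hχ => ?_
  obtain ⟨hsub, hvisits, -, hsel⟩ := (Finset.mem_filter.mp hχ).2
  exact ⟨hsub, hvisits, hsel⟩

lemma mem_Nnodes : ψ ∈ Nnodes M π ↔ M.f ψ < M.Q ∧ 0 < Pr M fun φ => visits M π φ ψ := by
  simp [Nnodes]

lemma Ex_Fm_nonneg (h : ψ e = none) : 0 ≤ Ex M (Fm M ψ e) :=
  Finset.sum_nonneg fun φ _ => mul_nonneg (M.p_nonneg φ) (Fm_nonneg h φ)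

lemma price_nonneg (h : ψ e = none) : 0 ≤ price M ψ e :=
  div_nonneg (M.c_pos e).le (Ex_Fm_nonneg h)

/- Some unselected item has positive marginal utility on a realization of positive probability, and
an item of zero expected marginal utility would be infinitely more expensive than that one. -/
lemma IsGreedy.Ex_Fm_pos (hσ : IsGreedy M α σ) (hψ : ψ ∈ Nnodes M σ) :
    0 < Ex M (Fm M ψ (σ ψ)) := by
  obtain ⟨hQ, hvisited⟩ := mem_Nnodes.mp hψ
  obtain ⟨φ, hφ, hp⟩ := exists_of_Pr_pos hvisited
  obtain ⟨e, he, hFm⟩ := exists_Fm_pos hφ.subext_toSub hQ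
  have hpos : 0 < α * M.c e * Ex M (Fm M ψ (σ ψ)) :=
    (mul_pos (M.c_pos _) (Ex_pos (Fm_nonneg he) hp hFm)).trans_le (hσ.2 ψ hQ e he)
  exact (Ex_Fm_nonneg (hσ.1 ψ hQ)).lt_of_ne' (right_ne_zero_of_mul hpos.ne')

lemma IsGreedy.price_mul_Ex_Fm_le (hσ : IsGreedy M α σ) (hψ : ψ ∈ Nnodes M σ) (he : ψ e = none) :
    price M ψ (σ ψ) * Ex M (Fm M ψ e) ≤ α * M.c e := by
  rw [price, div_mul_eq_mul_div, div_le_iff₀ (hσ.Ex_Fm_pos hψ)]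
  exact hσ.2 ψ (mem_Nnodes.mp hψ).1 e he

lemma IsGreedy.exOn_price_mul_Fm (hσ : IsGreedy M α σ) (hQ : M.f ψ < M.Q)
    (hA : DependsOn A {σ ψ}ᶜ) (hvisits : ∀ φ, A φ → visits M σ φ ψ) :
    exOn M (fun φ => price M ψ (σ ψ) * Fm M ψ (σ ψ) φ) A = M.c (σ ψ) * Pr M A := by
  rw [exOn_const_mul, exOn_eq_Ex_mul_Pr (dependsOn_Fm ψ (σ ψ)) hA, ← mul_assoc]
  rcases (Pr_nonneg A).eq_or_lt with hnull | hpos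
  · rw [← hnull, mul_zero, mul_zero]
  · have hψ : ψ ∈ Nnodes M σ := mem_Nnodes.mpr ⟨hQ, hpos.trans_le (Pr_mono hvisits)⟩
    rw [price, div_mul_cancel₀ _ (hσ.Ex_Fm_pos hψ).ne']

variable (M) in
/-- The subrealizations at which the policy `π` selects `e`, visited or not. -/
def nodesSelecting (π : Sub E O → E) (e : E) : Finset (Sub E O) :=
  Finset.univ.filter fun ψ => M.f ψ < M.Q ∧ π ψ = e

lemma mem_nodesSelecting : ψ ∈ nodesSelecting M π e ↔ M.f ψ < M.Q ∧ π ψ = e := by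
  simp [nodesSelecting]

lemma IsPolicy.eq_none_of_mem_nodesSelecting (hπ : IsPolicy M π)
    (hψ : ψ ∈ nodesSelecting M π e) : ψ e = none := by
  obtain ⟨hQ, rfl⟩ := mem_nodesSelecting.mp hψ
  exact hπ ψ hQ

lemma mu_eq_sum (hσ : e ∈ Ssel M σ φ) (hπs : e ∈ Ssel M πs φ) :
    mu M σ πs e φ =
      ∑ ψ ∈ nodesSelecting M σ e, if visits M σ φ ψ then price M ψ e * Fm M ψ e φ else 0 := by
  rw [mu, if_pos hπs, if_pos hσ, nodesSelecting, Finset.sum_filter]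
  simp only [← ite_and, and_comm]

lemma price_mul_Fm_le_mu (hσ : IsPolicy M σ) (hψ : ψ ∈ nodesSelecting M σ e)
    (heσ : e ∈ Ssel M σ φ) (heπs : e ∈ Ssel M πs φ) (hvisits : visits M σ φ ψ) :
    price M ψ e * Fm M ψ e φ ≤ mu M σ πs e φ := by
  have hnonneg : ∀ χ ∈ nodesSelecting M σ e,
      0 ≤ if visits M σ φ χ then price M χ e * Fm M χ e φ else 0 := fun χ hχ =>
    have hχe := hσ.eq_none_of_mem_nodesSelecting hχ
    ite_nonneg (mul_nonneg (price_nonneg hχe) (Fm_nonneg hχe φ)) le_rfl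
  rw [mu_eq_sum heσ heπs]
  simpa only [if_pos hvisits] using Finset.single_le_sum hnonneg hψ

lemma IsGreedy.c_mul_Pr_le_exOn_mu (hσ : IsGreedy M α σ) (hA : DependsOn A {e}ᶜ)
    (hsel : ∀ φ, A φ → e ∈ Ssel M σ φ ∧ e ∈ Ssel M πs φ) :
    M.c e * Pr M A ≤ exOn M (mu M σ πs e) A := by
  have hnode : ∀ ψ ∈ nodesSelecting M σ e,
      exOn M (fun φ => price M ψ e * Fm M ψ e φ) (fun φ => A φ ∧ visits M σ φ ψ) =
        M.c e * Pr M fun φ => A φ ∧ visits M σ φ ψ := by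
    intro ψ hψ
    have he := hσ.1.eq_none_of_mem_nodesSelecting hψ
    obtain ⟨hQ, rfl⟩ := mem_nodesSelecting.mp hψ
    refine hσ.exOn_price_mul_Fm hQ (fun φ φ' h => congrArg₂ And (hA h) ?_) fun φ hφ => hφ.2
    exact dependsOn_visits σ ψ fun e' he' => h e' fun heq => he' (heq ▸ he)
  calc M.c e * Pr M A
      ≤ M.c e * ∑ ψ ∈ nodesSelecting M σ e, Pr M fun φ => A φ ∧ visits M σ φ ψ := by
        refine mul_le_mul_of_nonneg_left (Pr_le_sum_Pr fun φ hφ => ?_) (M.c_pos e).le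
        obtain ⟨ψ, hvisits, hQ, hσe⟩ := exists_visits_select_of_mem_Ssel (hsel φ hφ).1
        exact ⟨ψ, mem_nodesSelecting.mpr ⟨hQ, hσe⟩, hφ, hvisits⟩
    _ = exOn M (fun φ => ∑ ψ ∈ nodesSelecting M σ e,
          if visits M σ φ ψ then price M ψ e * Fm M ψ e φ else 0) A := by
        rw [exOn_sum_ite, Finset.mul_sum, Finset.sum_congr rfl hnode]
    _ ≤ exOn M (mu M σ πs e) A :=
        exOn_mono fun φ hφ => (mu_eq_sum (hsel φ hφ).1 (hsel φ hφ).2).ge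

lemma IsGreedy.price_mul_exOn_Fm_le_of_ne (hσ : IsGreedy M α σ) (hα : 0 ≤ α)
    (hψ : ψ ∈ Nnodes M σ) (he : ψ e = none) (hA : DependsOn A {e}ᶜ)
    (hsel : ∀ φ, A φ → e ∈ Ssel M σ φ ∧ e ∈ Ssel M πs φ) :
    price M ψ (σ ψ) * exOn M (Fm M ψ e) A ≤ α * exOn M (mu M σ πs e) A :=
  calc price M ψ (σ ψ) * exOn M (Fm M ψ e) A
      = price M ψ (σ ψ) * Ex M (Fm M ψ e) * Pr M A := by
        rw [exOn_eq_Ex_mul_Pr (dependsOn_Fm ψ e) hA, mul_assoc]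
    _ ≤ α * M.c e * Pr M A :=
        mul_le_mul_of_nonneg_right (hσ.price_mul_Ex_Fm_le hψ he) (Pr_nonneg A)
    _ ≤ α * exOn M (mu M σ πs e) A := by
        rw [mul_assoc]
        exact mul_le_mul_of_nonneg_left (hσ.c_mul_Pr_le_exOn_mu hA hsel) hα

lemma IsPolicy.price_mul_exOn_Fm_le_of_eq (hσ : IsPolicy M σ) (hα : 1 ≤ α)
    (hQ : M.f ψ < M.Q) (hvisits : ∀ φ, A φ → visits M σ φ ψ)
    (hsel : ∀ φ, A φ → σ ψ ∈ Ssel M σ φ ∧ σ ψ ∈ Ssel M πs φ) :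
    price M ψ (σ ψ) * exOn M (Fm M ψ (σ ψ)) A ≤ α * exOn M (mu M σ πs (σ ψ)) A := by
  rw [← exOn_const_mul, ← exOn_const_mul]
  refine exOn_mono fun φ hφ => ?_
  have hle := price_mul_Fm_le_mu hσ (mem_nodesSelecting.mpr ⟨hQ, rfl⟩) (hsel φ hφ).1 (hsel φ hφ).2
    (hvisits φ hφ)
  have hnonneg : 0 ≤ price M ψ (σ ψ) * Fm M ψ (σ ψ) φ :=
    mul_nonneg (price_nonneg (hσ ψ hQ)) (Fm_nonneg (hσ ψ hQ) φ)
  exact hle.trans (le_mul_of_one_le_left (hnonneg.trans hle) hα)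

end Bounds

theorem mu_delta_bound_on_B_general {α : ℝ} (hα : 1 ≤ α) {σ : Sub E O → E} (hσ : IsGreedy M α σ)
    (πs : Sub E O → E) (b : ℝ) {ψ : Sub E O} (hψ : ψ ∈ Nnodes M σ) {e : E} (he : ψ e = none) :
    price M ψ (σ ψ) *
        exOn M (deltaPlus M σ πs ψ e)
          (fun φ => (e ∈ Ssel M σ φ ∧ e ∈ Ssel M πs φ) ∧ leadsTo M σ b ψ φ)
      ≤ α * exOn M (mu M σ πs e)
          (fun φ => (e ∈ Ssel M σ φ ∧ e ∈ Ssel M πs φ) ∧ leadsTo M σ b ψ φ) := by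
  have hQ : M.f ψ < M.Q := (mem_Nnodes.mp hψ).1
  have hnone : ψ (σ ψ) = none := hσ.1 ψ hQ
  refine (mul_le_mul_of_nonneg_left (exOn_mono fun φ _ => deltaPlus_le_Fm σ πs he φ)
    (price_nonneg hnone)).trans ?_
  by_cases hsel : σ ψ = e
  · subst hsel
    exact hσ.1.price_mul_exOn_Fm_le_of_eq hα hQ (fun φ hφ => hφ.2.1) fun φ hφ => hφ.1
  · refine hσ.price_mul_exOn_Fm_le_of_ne (zero_le_one.trans hα) hψ he (fun φ φ' h => ?_)
      fun φ hφ => hφ.1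
    refine congrArg₂ And
      (congrArg₂ And (dependsOn_mem_Ssel σ e h) (dependsOn_mem_Ssel πs e h))
      (dependsOn_leadsTo hQ hnone fun e' he' => h e' ?_)
    rintro rfl
    exact he'.elim (fun hsome => hsome he) fun heq => hsel heq.symm

/-- For `ψ ∈ N(σ)`, a marker index `i` with `Pr[ψ ↝ i] > 0`, and
`e ∉ dom ψ`, conditioned additionally on the event `B(e)` that `e` is selected both by
`σ` and by `π*`: `α·E[μ(e) | B(e) ∧ ψ ↝ i] ≥ υ_ψ·E[δ⁺_ψ(e) | B(e) ∧ ψ ↝ i]`. -/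
theorem mu_delta_bound_on_B
    (M : Problem E O) (α : ℝ) (hα : 1 ≤ α)
    (σ : Sub E O → E) (hσ : IsGreedy M α σ)
    (πs : Sub E O → E) (hπs : IsOptimal M πs)
    (t : ℕ) (ρ : ℕ → Sub E O)
    (hcard : t = (Nnodes M σ).card)
    (hρmem : ∀ i, 1 ≤ i → i ≤ t → ρ i ∈ Nnodes M σ)
    (hρinj : ∀ i j, 1 ≤ i → i ≤ t → 1 ≤ j → j ≤ t → ρ i = ρ j → i = j)
    (hρmono : ∀ i j, 1 ≤ i → i ≤ j → j ≤ t → M.f (ρ i) ≤ M.f (ρ j))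
    (i : ℕ) (hi1 : 1 ≤ i) (hit : i ≤ t)
    (ψ : Sub E O) (hmem : ψ ∈ Nnodes M σ)
    (hpos : 0 < Pr M (leadsTo M σ (M.f (ρ i)) ψ))
    (e : E) (he : ψ e = none) :
    price M ψ (σ ψ) *
        cEx M (deltaPlus M σ πs ψ e)
          (fun φ => (e ∈ Ssel M σ φ ∧ e ∈ Ssel M πs φ) ∧ leadsTo M σ (M.f (ρ i)) ψ φ)
      ≤ α * cEx M (mu M σ πs e)
          (fun φ => (e ∈ Ssel M σ φ ∧ e ∈ Ssel M πs φ) ∧ leadsTo M σ (M.f (ρ i)) ψ φ) :=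
  mul_cEx_le_mul_cEx (mu_delta_bound_on_B_general hα hσ πs _ hmem he)

end
end SSC
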